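/- Let q ≥ 2 be an even integer, λ₁, λ₂ > 0, and let (f_n), (g_n) be sequences of symmetric functions in L²(ℝ₊^q) such that ⟨f_n, f_n⟩ → λ₁, ⟨g_n, g_n⟩ → λ₂, ⟨f_n, g_n⟩ → 0, and ‖g_n ⌢_{q/2} g_n − g_n‖ → 0 as n → ∞. Then the sequence ‖f_n ⌢_{q/2} g_n‖² + 2 Re⟨f_n ⌢_{q/2} g_n, g_n⟩ + Σ_{1 ≤ r ≤ q−1, r ≠ q/2} ‖f_n ⌢_r g_n‖² converges to 0 as n → ∞ if and only if ‖f_n ⌢_r g_n‖ → 0 for every r = 1, 2, …, q−1. -/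

import Mathlib

open MeasureTheory Filter Topology

noncomputable section

/-- The positive orthant `ℝ₊ⁿ` inside `ℝⁿ`. -/
def posOrthant (n : ℕ) : Set (Fin n → ℝ) := {x | ∀ i, 0 ≤ x i}

/-- Lebesgue measure restricted to the positive orthant; the measure underlying `L²(ℝ₊ⁿ)`. -/
def μpos (n : ℕ) : MeasureTheory.Measure (Fin n → ℝ) :=
  MeasureTheory.volume.restrict (posOrthant n)

/-- Total extension of a finite tuple, giving the junk value `0` out of range. -/
def pad {k : ℕ} (t : Fin k → ℝ) (i : ℕ) : ℝ := if h : i < k then t ⟨i, h⟩ else 0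

/-- The `L²` inner product `⟨f, g⟩ = ∫ f ⬝ conj g` over the positive orthant. -/
def L2inner (n : ℕ) (f g : (Fin n → ℝ) → ℂ) : ℂ :=
  ∫ x, f x * (starRingEnd ℂ) (g x) ∂(μpos n)

/-- The `L²` norm over the positive orthant. -/
def L2norm (n : ℕ) (f : (Fin n → ℝ) → ℂ) : ℝ :=
  Real.sqrt (∫ x, ‖f x‖ ^ 2 ∂(μpos n))

/-- The adjoint `f*(t₁,…,tₙ) = conj (f (tₙ,…,t₁))`. -/
def adjF (n : ℕ) (f : (Fin n → ℝ) → ℂ) : (Fin n → ℝ) → ℂ :=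
  fun t => (starRingEnd ℂ) (f fun i => t i.rev)

/-- `f` is symmetric when `f = f*` a.e. on the positive orthant. -/
def IsSymmFn (n : ℕ) (f : (Fin n → ℝ) → ℂ) : Prop :=
  ∀ᵐ t ∂(μpos n), f t = adjF n f t

/-- Reindexing a multivariate function along an equality of dimensions. -/
def reindex {a b : ℕ} (h : a = b) (F : (Fin a → ℝ) → ℂ) : (Fin b → ℝ) → ℂ :=
  fun t => F fun j => t (Fin.cast h j)

/-- The integrand (in the `s`-variables) of the `p`-th arc contraction
`(f ⌢_p g)(t₁,…,t_{m+n-2p}) = ∫ f(t₁,…,t_{m-p},s_p,…,s₁) g(s₁,…,s_p,t_{m-p+1},…,t_{m+n-2p}) ds`. -/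
def arcKer (m n p : ℕ) (f : (Fin m → ℝ) → ℂ) (g : (Fin n → ℝ) → ℂ)
    (t : Fin (m + n - 2 * p) → ℝ) (s : Fin p → ℝ) : ℂ :=
  f (fun j => if (j : ℕ) < m - p then pad t j else pad s (m - 1 - (j : ℕ))) *
  g (fun j => if (j : ℕ) < p then pad s j else pad t (m + (j : ℕ) - 2 * p))

/-- The `p`-th arc contraction `f ⌢_p g`. -/
def arc (m n p : ℕ) (f : (Fin m → ℝ) → ℂ) (g : (Fin n → ℝ) → ℂ) :
    (Fin (m + n - 2 * p) → ℝ) → ℂ :=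
  fun t => ∫ s in posOrthant p, arcKer m n p f g t s

/-- The integrand of the star contraction of index `(p, p-1)`:
`(f ⋆_p^{p-1} g)(t₁,…,t_{m+n-2p+1})
  = ∫ f(t₁,…,t_{m-p},t_{m-p+1},s_{p-1},…,s₁) g(s₁,…,s_{p-1},t_{m-p+1},…,t_{m+n-2p+1}) ds`. -/
def starKer (m n p : ℕ) (f : (Fin m → ℝ) → ℂ) (g : (Fin n → ℝ) → ℂ)
    (t : Fin (m + n + 1 - 2 * p) → ℝ) (s : Fin (p - 1) → ℝ) : ℂ :=
  f (fun j => if (j : ℕ) < m - p + 1 then pad t j else pad s (m - 1 - (j : ℕ))) *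
  g (fun j => if (j : ℕ) < p - 1 then pad s j else pad t (m + (j : ℕ) + 1 - 2 * p))

/-- The star contraction `f ⋆_p^{p-1} g` of index `(p, p-1)`. -/
def starC (m n p : ℕ) (f : (Fin m → ℝ) → ℂ) (g : (Fin n → ℝ) → ℂ) :
    (Fin (m + n + 1 - 2 * p) → ℝ) → ℂ :=
  fun t => ∫ s in posOrthant (p - 1), starKer m n p f g t s

/-- The `q/2`-th arc contraction of two functions of `q` (even) variables,
expressed again as a function of `q` variables. -/
def contrHalf (q : ℕ) (f g : (Fin q → ℝ) → ℂ) : (Fin q → ℝ) → ℂ :=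
  fun t => ∫ s in posOrthant (q / 2),
    (f fun j => if (j : ℕ) < q - q / 2 then pad t j else pad s (q - 1 - (j : ℕ))) *
    (g fun j => if (j : ℕ) < q / 2 then pad s j else pad t (q + (j : ℕ) - 2 * (q / 2)))

/-- The full contraction `f ⌢_q g = ∫ f(t₁,…,t_q) g(t_q,…,t₁) dt` of two
functions of `q` variables. -/
def fullContr (q : ℕ) (f g : (Fin q → ℝ) → ℂ) : ℂ :=
  ∫ t in posOrthant q, f t * g fun i => t i.rev

/-- A `q`-dimensional square (cube): a product of `q` intervals of equal length. -/
def IsCube (q : ℕ) (S : Set (Fin q → ℝ)) : Prop :=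
  ∃ (a : Fin q → ℝ) (c : ℝ), S = Set.univ.pi fun i => Set.Icc (a i) (a i + c)

/-- One step of the left-bracketed iterated contraction, keeping track of the dimension. -/
def iterStep (q : ℕ) (acc : (d : ℕ) × ((Fin d → ℝ) → ℂ))
    (pr : ℕ × ((Fin q → ℝ) → ℂ)) : (d : ℕ) × ((Fin d → ℝ) → ℂ) :=
  ⟨acc.1 + q - 2 * pr.1, arc acc.1 q pr.1 acc.2 pr.2⟩

/-- The left-bracketed iterated contraction `(⋯((f₀ ⌢_{r₁} f₁) ⌢_{r₂} f₂)⋯) ⌢_{r_k} f_k`. -/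
def iterArc (q : ℕ) (f0 : (Fin q → ℝ) → ℂ) (l : List (ℕ × ((Fin q → ℝ) → ℂ))) :
    (d : ℕ) × ((Fin d → ℝ) → ℂ) :=
  l.foldl (iterStep q) ⟨q, f0⟩

/-- The value of a (`0`-dimensional, i.e. scalar) iterated contraction. -/
def scalarOf (x : (d : ℕ) × ((Fin d → ℝ) → ℂ)) : ℂ := x.2 fun _ => 0


/-!
Splitting tuples as `(t, s) ↦ (t₁, …, t_a, s_b, …, s₁)` and `(s, u) ↦ (s₁, …, s_b, u₁, …, u_c)`
turns the arc contraction `f ⌢_b g` into the composition of two Hilbert–Schmidt kernels, and Fubini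
then gives the adjunction `⟨f ⌢_b g, h⟩ = ⟨f, h ⌢_c g*⟩`. For symmetric `g` of `q` variables this
reads `⟨f ⌢_{q/2} g, g⟩ = ⟨f, g ⌢_{q/2} g⟩`, which differs from `⟨f, g⟩` by at most
`‖f‖ ‖g ⌢_{q/2} g - g‖`. So the cross term of the combined quantity tends to `0`, and what remains
is the sum of the squares `‖f ⌢_r g‖²`, which tends to `0` exactly when each of its terms does.
-/

section KernelComposition

variable {α β γ : Type*} [MeasurableSpace α] [MeasurableSpace β] [MeasurableSpace γ]
  {μ : Measure α} {ν : Measure β} {ρ : Measure γ}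

variable {𝕜 : Type*} [RCLike 𝕜]

theorem norm_integral_mul_le_sqrt_mul_sqrt {f g : α → 𝕜} (hf : MemLp f 2 μ) (hg : MemLp g 2 μ) :
    ‖∫ x, f x * g x ∂μ‖ ≤ √(∫ x, ‖f x‖ ^ 2 ∂μ) * √(∫ x, ‖g x‖ ^ 2 ∂μ) := by
  have holder := integral_mul_norm_le_Lp_mul_Lq (μ := μ) (f := f) (g := g)
    Real.HolderConjugate.two_two (by simpa using hf) (by simpa using hg)
  simp only [Real.rpow_ofNat, ← Real.sqrt_eq_rpow] at holder
  refine (norm_integral_le_integral_norm _).trans ?_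
  simpa only [norm_mul] using holder

/-- The kernel `(x, z) ↦ ∫ F(x, y) G(y, z) dν(y)` of the composition of the integral operators
with kernels `F` and `G`. -/
def kernelComp (ν : Measure β) (F : α × β → 𝕜) (G : β × γ → 𝕜) (p : α × γ) : 𝕜 :=
  ∫ y, F (p.1, y) * G (y, p.2) ∂ν

theorem kernelComp_congr_ae_right [SFinite ν] [SFinite ρ] (F : α × β → 𝕜) {G G' : β × γ → 𝕜}
    (h : G =ᵐ[ν.prod ρ] G') :
    kernelComp ν F G =ᵐ[μ.prod ρ] kernelComp ν F G' := by
  have hswap : ∀ᵐ p ∂ρ.prod ν, G p.swap = G' p.swap :=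
    Measure.measurePreserving_swap.quasiMeasurePreserving.ae h
  filter_upwards [Measure.quasiMeasurePreserving_snd.ae (Measure.ae_ae_of_ae_prod hswap)] with p hp
  refine integral_congr_ae ?_
  filter_upwards [hp] with y hy
  exact congrArg (F (p.1, y) * ·) hy

variable [SFinite μ] [SFinite ν] [SFinite ρ]

theorem ae_memLp_two_prodMk_left {E : Type*} [NormedAddCommGroup E] {F : α × β → E}
    (hF : MemLp F 2 (μ.prod ν)) : ∀ᵐ x ∂μ, MemLp (fun y => F (x, y)) 2 ν := by
  have hsq := ((memLp_two_iff_integrable_sq_norm hF.1).1 hF).prod_right_ae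
  filter_upwards [hsq, hF.1.prodMk_left] with x hx hmeas
  exact (memLp_two_iff_integrable_sq_norm hmeas).2 hx

theorem ae_memLp_two_prodMk_right {E : Type*} [NormedAddCommGroup E] {F : α × β → E}
    (hF : MemLp F 2 (μ.prod ν)) : ∀ᵐ y ∂ν, MemLp (fun x => F (x, y)) 2 μ :=
  ae_memLp_two_prodMk_left (F := F ∘ Prod.swap)
    (hF.comp_measurePreserving Measure.measurePreserving_swap)

/-- The regrouping `((x, y), z) ↦ ((x, z), y)`. -/
def prodRightComm : (α × β) × γ ≃ᵐ (α × γ) × β :=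
  (MeasurableEquiv.prodAssoc.trans ((MeasurableEquiv.refl α).prodCongr
    MeasurableEquiv.prodComm)).trans MeasurableEquiv.prodAssoc.symm

theorem measurePreserving_prodRightComm :
    MeasurePreserving prodRightComm ((μ.prod ν).prod ρ) ((μ.prod ρ).prod ν) :=
  ((measurePreserving_prodAssoc μ ρ ν).symm).comp
    (((MeasurePreserving.id μ).prod Measure.measurePreserving_swap).comp
      (measurePreserving_prodAssoc μ ν ρ))

variable {F : α × β → 𝕜} {G : β × γ → 𝕜}

theorem aestronglyMeasurable_kernel_mul (hF : AEStronglyMeasurable F (μ.prod ν))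
    (hG : AEStronglyMeasurable G (ν.prod ρ)) :
    AEStronglyMeasurable (fun w : (α × γ) × β => F (w.1.1, w.2) * G (w.2, w.1.2))
      ((μ.prod ρ).prod ν) := by
  have hF' := hF.comp_quasiMeasurePreserving (QuasiMeasurePreserving.prodMap
    (Measure.quasiMeasurePreserving_fst (μ := μ) (ν := ρ)) (.id ν))
  have hG' := hG.prod_swap.comp_quasiMeasurePreserving (QuasiMeasurePreserving.prodMap
    (Measure.quasiMeasurePreserving_snd (μ := μ) (ν := ρ)) (.id ν))
  exact hF'.mul hG'

theorem memLp_kernelComp (hF : MemLp F 2 (μ.prod ν)) (hG : MemLp G 2 (ν.prod ρ)) :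
    MemLp (kernelComp ν F G) 2 (μ.prod ρ) := by
  have hmeas : AEStronglyMeasurable (kernelComp ν F G) (μ.prod ρ) :=
    (aestronglyMeasurable_kernel_mul hF.1 hG.1).integral_prod_right'
  have hFsq := ((memLp_two_iff_integrable_sq_norm hF.1).1 hF).integral_prod_left
  have hGsq := ((memLp_two_iff_integrable_sq_norm hG.1).1 hG).integral_prod_right
  refine (memLp_two_iff_integrable_sq_norm hmeas).2 ?_
  refine (hFsq.mul_prod hGsq).mono' (hmeas.norm.pow 2) ?_
  filter_upwards [Measure.quasiMeasurePreserving_fst.ae (ae_memLp_two_prodMk_left hF),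
    Measure.quasiMeasurePreserving_snd.ae (ae_memLp_two_prodMk_right hG)] with p hFp hGp
  calc ‖‖kernelComp ν F G p‖ ^ 2‖ = ‖kernelComp ν F G p‖ ^ 2 := by simp
    _ ≤ (√(∫ y, ‖F (p.1, y)‖ ^ 2 ∂ν) * √(∫ y, ‖G (y, p.2)‖ ^ 2 ∂ν)) ^ 2 := by
        gcongr
        exact norm_integral_mul_le_sqrt_mul_sqrt hFp hGp
    _ = (∫ y, ‖F (p.1, y)‖ ^ 2 ∂ν) * ∫ y, ‖G (y, p.2)‖ ^ 2 ∂ν := by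
        rw [mul_pow, Real.sq_sqrt (by positivity), Real.sq_sqrt (by positivity)]

theorem integrable_kernel_mul_mul {K : α × γ → 𝕜} (hF : MemLp F 2 (μ.prod ν))
    (hG : MemLp G 2 (ν.prod ρ)) (hK : MemLp K 2 (μ.prod ρ)) :
    Integrable (fun w : (α × γ) × β => F (w.1.1, w.2) * G (w.2, w.1.2) * K w.1)
      ((μ.prod ρ).prod ν) := by
  refine (integrable_prod_iff
    ((aestronglyMeasurable_kernel_mul hF.1 hG.1).mul hK.1.comp_fst)).2 ⟨?_, ?_⟩
  · filter_upwards [Measure.quasiMeasurePreserving_fst.ae (ae_memLp_two_prodMk_left hF),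
      Measure.quasiMeasurePreserving_snd.ae (ae_memLp_two_prodMk_right hG)] with p hFp hGp
    exact (hFp.integrable_mul hGp).mul_const (K p)
  · refine ((memLp_kernelComp hF.norm hG.norm).integrable_mul hK.norm).congr
      (ae_of_all _ fun p => ?_)
    simp only [kernelComp, Pi.mul_apply, ← integral_mul_const, norm_mul]

theorem integral_kernelComp_mul {K : α × γ → 𝕜} (hF : MemLp F 2 (μ.prod ν))
    (hG : MemLp G 2 (ν.prod ρ)) (hK : MemLp K 2 (μ.prod ρ)) :
    ∫ p, kernelComp ν F G p * K p ∂μ.prod ρ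
      = ∫ p, F p * kernelComp ρ K (G ∘ Prod.swap) p ∂μ.prod ν := by
  let T : (α × γ) × β → 𝕜 := fun w => F (w.1.1, w.2) * G (w.2, w.1.2) * K w.1
  have hT : Integrable T ((μ.prod ρ).prod ν) := integrable_kernel_mul_mul hF hG hK
  have hperm : MeasurePreserving prodRightComm ((μ.prod ν).prod ρ) ((μ.prod ρ).prod ν) :=
    measurePreserving_prodRightComm
  calc ∫ p, kernelComp ν F G p * K p ∂μ.prod ρ
      = ∫ p, ∫ y, T (p, y) ∂ν ∂μ.prod ρ := by simp only [T, kernelComp, integral_mul_const]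
    _ = ∫ w, T w ∂(μ.prod ρ).prod ν := (integral_prod _ hT).symm
    _ = ∫ w, T (prodRightComm w) ∂(μ.prod ν).prod ρ := (hperm.integral_comp' T).symm
    _ = ∫ p, ∫ z, T (prodRightComm (p, z)) ∂ρ ∂μ.prod ν :=
        integral_prod _ (hperm.integrable_comp_of_integrable hT)
    _ = ∫ p, F p * kernelComp ρ K (G ∘ Prod.swap) p ∂μ.prod ν := by
        simp only [kernelComp, ← integral_const_mul]
        refine integral_congr_ae (ae_of_all _ fun p => integral_congr_ae (ae_of_all _ fun z => ?_))
        exact (mul_assoc _ _ _).trans (congrArg _ (mul_comm _ _))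

end KernelComposition

section Concatenation

theorem μpos_eq_pi (n : ℕ) : μpos n = Measure.pi fun _ => volume.restrict (Set.Ici (0 : ℝ)) := by
  have : posOrthant n = Set.univ.pi fun _ => Set.Ici 0 := by ext; simp [posOrthant, Pi.le_def]
  rw [μpos, this, volume_pi, Measure.restrict_pi_pi]

instance (n : ℕ) : SFinite (μpos n) := by rw [μpos_eq_pi]; infer_instance

/-- Concatenation of an `a`-tuple and a `b`-tuple into an `n`-tuple, where `a + b = n`. -/
def concatEquiv {a b n : ℕ} (h : a + b = n) : (Fin a → ℝ) × (Fin b → ℝ) ≃ᵐ (Fin n → ℝ) :=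
  (MeasurableEquiv.sumPiEquivProdPi fun _ => ℝ).symm.trans
    (MeasurableEquiv.arrowCongr' (finSumFinEquiv.trans (finCongr h)) (.refl ℝ))

/-- The reversal `(s₁, …, sₙ) ↦ (sₙ, …, s₁)`. -/
def revEquiv (n : ℕ) : (Fin n → ℝ) ≃ᵐ (Fin n → ℝ) :=
  MeasurableEquiv.arrowCongr' Fin.revPerm (.refl ℝ)

/-- The map `((t₁, …, t_a), (s₁, …, s_b)) ↦ (t₁, …, t_a, s_b, …, s₁)`, which is how the integration
variables enter the left factor of an arc contraction. -/
def concatRevEquiv {a b n : ℕ} (h : a + b = n) : (Fin a → ℝ) × (Fin b → ℝ) ≃ᵐ (Fin n → ℝ) :=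
  ((MeasurableEquiv.refl _).prodCongr (revEquiv b)).trans (concatEquiv h)

theorem measurePreserving_concatEquiv {a b n : ℕ} (h : a + b = n) :
    MeasurePreserving (concatEquiv h) ((μpos a).prod (μpos b)) (μpos n) := by
  simp only [μpos_eq_pi]
  exact (measurePreserving_arrowCongr' _ _ _ _ fun _ => .id _).comp
    (measurePreserving_sumPiEquivProdPi_symm fun _ => volume.restrict (Set.Ici (0 : ℝ)))

theorem measurePreserving_revEquiv (n : ℕ) : MeasurePreserving (revEquiv n) (μpos n) (μpos n) := by
  simp only [μpos_eq_pi]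
  exact measurePreserving_arrowCongr' _ _ _ _ fun _ => .id _

theorem measurePreserving_concatRevEquiv {a b n : ℕ} (h : a + b = n) :
    MeasurePreserving (concatRevEquiv h) ((μpos a).prod (μpos b)) (μpos n) :=
  (measurePreserving_concatEquiv h).comp ((MeasurePreserving.id _).prod
    (measurePreserving_revEquiv b))

theorem revEquiv_revEquiv (n : ℕ) (s : Fin n → ℝ) : revEquiv n (revEquiv n s) = s :=
  funext fun i => congrArg s i.rev_rev

theorem concatRevEquiv_apply {a b n : ℕ} (h : a + b = n) (t : Fin a → ℝ) (s : Fin b → ℝ) :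
    concatRevEquiv h (t, s) = concatEquiv h (t, revEquiv b s) :=
  rfl

theorem concatEquiv_apply {a b n : ℕ} (h : a + b = n) (t : Fin a → ℝ) (u : Fin b → ℝ) (j : Fin n) :
    concatEquiv h (t, u) j = Fin.append t u (Fin.cast h.symm j) := by
  subst h
  refine Fin.addCases (fun i => ?_) (fun i => ?_) j <;>
    simp [concatEquiv, MeasurableEquiv.arrowCongr', Equiv.arrowCongr',
    MeasurableEquiv.sumPiEquivProdPi, Equiv.sumPiEquivProdPi]

theorem revEquiv_concatEquiv {a b n : ℕ} (h : a + b = n) (h' : b + a = n) (t : Fin a → ℝ)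
    (u : Fin b → ℝ) :
    revEquiv n (concatEquiv h (t, u)) = concatEquiv h' (revEquiv b u, revEquiv a t) := by
  subst h
  ext j
  rw [concatEquiv_apply]
  exact (concatEquiv_apply _ _ _ _).trans (Fin.append_rev t u j)

theorem pad_val {n : ℕ} (x : Fin n → ℝ) (j : Fin n) : pad x j = x j := by simp [pad]

theorem pad_cast {m n : ℕ} (h : m = n) (x : Fin n → ℝ) (i : ℕ) :
    pad (fun j => x (Fin.cast h j)) i = pad x i := by
  subst h; rfl

theorem pad_concatEquiv {a b n : ℕ} (h : a + b = n) (t : Fin a → ℝ) (u : Fin b → ℝ) (i : ℕ) :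
    pad (concatEquiv h (t, u)) i = if i < a then pad t i else pad u (i - a) := by
  subst h
  by_cases hi : i < a + b
  · obtain ⟨j, rfl⟩ : ∃ j : Fin (a + b), (j : ℕ) = i := ⟨⟨i, hi⟩, rfl⟩
    rw [pad_val, concatEquiv_apply]
    refine Fin.addCases (fun k => ?_) (fun k => ?_) j <;> simp [pad]
  · simp [pad, show ¬i < a + b by omega, show ¬i < a by omega, show ¬i - a < b by omega]

theorem pad_revEquiv {n i : ℕ} (hi : i < n) (s : Fin n → ℝ) :
    pad (revEquiv n s) i = pad s (n - 1 - i) := by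
  rw [pad, pad, dif_pos hi, dif_pos (by omega)]
  exact congrArg s (Fin.ext (by simp; omega))

end Concatenation

section ArcContraction

theorem norm_L2inner_le {n : ℕ} {f g : (Fin n → ℝ) → ℂ} (hf : MemLp f 2 (μpos n))
    (hg : MemLp g 2 (μpos n)) : ‖L2inner n f g‖ ≤ L2norm n f * L2norm n g := by
  simpa [L2inner, L2norm] using norm_integral_mul_le_sqrt_mul_sqrt hf hg.star

theorem L2inner_sub_right {n : ℕ} {f g h : (Fin n → ℝ) → ℂ} (hf : MemLp f 2 (μpos n))
    (hg : MemLp g 2 (μpos n)) (hh : MemLp h 2 (μpos n)) :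
    L2inner n f (g - h) = L2inner n f g - L2inner n f h := by
  simp only [L2inner, Pi.sub_apply, map_sub, mul_sub]
  exact integral_sub (hf.integrable_mul hg.star) (hf.integrable_mul hh.star)

theorem L2inner_congr_ae_right {n : ℕ} (f : (Fin n → ℝ) → ℂ) {g g' : (Fin n → ℝ) → ℂ}
    (h : g =ᵐ[μpos n] g') : L2inner n f g = L2inner n f g' := by
  refine integral_congr_ae ?_
  filter_upwards [h] with x hx
  rw [hx]

theorem L2norm_nonneg (n : ℕ) (f : (Fin n → ℝ) → ℂ) : 0 ≤ L2norm n f :=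
  Real.sqrt_nonneg _

theorem L2norm_eq_sqrt_re_L2inner (n : ℕ) (f : (Fin n → ℝ) → ℂ) :
    L2norm n f = √(L2inner n f f).re := by
  have hsq : L2inner n f f = ((∫ x, ‖f x‖ ^ 2 ∂μpos n : ℝ) : ℂ) := by
    simp only [L2inner, Complex.mul_conj', ← Complex.ofReal_pow, integral_complex_ofReal]
  rw [hsq, Complex.ofReal_re, L2norm]

theorem L2norm_reindex {a b : ℕ} (h : a = b) (F : (Fin a → ℝ) → ℂ) :
    L2norm b (reindex h F) = L2norm a F := by
  subst h; rfl

section Adjunction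

variable {a b c m n d : ℕ} (hm : a + b = m) (hn : b + c = n) (hd : a + c = d)

theorem reindex_arc_comp_concatEquiv (f : (Fin m → ℝ) → ℂ) (g : (Fin n → ℝ) → ℂ) :
    reindex (show m + n - 2 * b = d by omega) (arc m n b f g) ∘ concatEquiv hd
      = kernelComp (μpos b) (f ∘ concatRevEquiv hm) (g ∘ concatEquiv hn) := by
  funext ⟨t, u⟩
  refine integral_congr_ae (ae_of_all _ fun s => congrArg₂ (· * ·) (congrArg f ?_) (congrArg g ?_))
  · funext j
    refine Eq.trans ?_ (pad_val (concatRevEquiv hm (t, s)) j)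
    simp only [pad_cast, pad_concatEquiv, concatRevEquiv_apply]
    by_cases hj : (j : ℕ) < a
    · simp only [hj, show (j : ℕ) < m - b by omega, if_true]
    · simp only [hj, show ¬(j : ℕ) < m - b by omega, if_false]
      rw [pad_revEquiv (by omega)]
      congr 1
      omega
  · funext j
    refine Eq.trans ?_ (pad_val (concatEquiv hn (s, u)) j)
    simp only [pad_cast, pad_concatEquiv]
    by_cases hj : (j : ℕ) < b
    · simp only [hj, if_true]
    · simp only [hj, show ¬m + (j : ℕ) - 2 * b < a by omega, if_false]
      congr 1
      omega

theorem memLp_reindex_arc {f : (Fin m → ℝ) → ℂ} {g : (Fin n → ℝ) → ℂ} (hf : MemLp f 2 (μpos m))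
    (hg : MemLp g 2 (μpos n)) :
    MemLp (reindex (show m + n - 2 * b = d by omega) (arc m n b f g)) 2 (μpos d) := by
  rw [← (measurePreserving_concatEquiv hd).map_eq, (concatEquiv hd).memLp_map_measure_iff,
    reindex_arc_comp_concatEquiv hm hn hd]
  exact memLp_kernelComp (hf.comp_measurePreserving (measurePreserving_concatRevEquiv hm))
    (hg.comp_measurePreserving (measurePreserving_concatEquiv hn))

theorem reindex_arc_congr_ae_right (f : (Fin m → ℝ) → ℂ) {g g' : (Fin n → ℝ) → ℂ}
    (h : g =ᵐ[μpos n] g') :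
    reindex (show m + n - 2 * b = d by omega) (arc m n b f g)
      =ᵐ[μpos d] reindex (show m + n - 2 * b = d by omega) (arc m n b f g') := by
  have hcomp := kernelComp_congr_ae_right (μ := μpos a) (f ∘ concatRevEquiv hm)
    ((measurePreserving_concatEquiv hn).quasiMeasurePreserving.ae_eq_comp h)
  rw [← reindex_arc_comp_concatEquiv hm hn hd, ← reindex_arc_comp_concatEquiv hm hn hd] at hcomp
  rw [← (measurePreserving_concatEquiv hd).map_eq]
  exact (concatEquiv hd).measurableEmbedding.ae_map_iff.2 hcomp

theorem conj_reindex_arc_adjF_concatRevEquiv (g : (Fin n → ℝ) → ℂ) (h : (Fin d → ℝ) → ℂ)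
    (p : (Fin a → ℝ) × (Fin b → ℝ)) :
    (starRingEnd ℂ) (reindex (show d + n - 2 * c = m by omega) (arc d n c h (adjF n g))
        (concatRevEquiv hm p))
      = kernelComp (μpos c) (star h ∘ concatEquiv hd) ((g ∘ concatEquiv hn) ∘ Prod.swap) p := by
  obtain ⟨t, s⟩ := p
  rw [concatRevEquiv_apply]
  have harc := congrFun (reindex_arc_comp_concatEquiv hd ((add_comm c b).trans hn) hm h (adjF n g))
    (t, revEquiv b s)
  rw [Function.comp_apply] at harc
  rw [harc]
  calc _ = ∫ v, star h (concatEquiv hd (t, revEquiv c v))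
          * g (concatEquiv hn (s, revEquiv c v)) ∂μpos c := by
        refine integral_conj.symm.trans (integral_congr_ae (ae_of_all _ fun v => ?_))
        have hrev : (fun i => concatEquiv ((add_comm c b).trans hn) (v, revEquiv b s) i.rev)
            = concatEquiv hn (s, revEquiv c v) :=
          (revEquiv_concatEquiv _ hn v (revEquiv b s)).trans (by rw [revEquiv_revEquiv])
        simp [adjF, hrev, concatRevEquiv_apply]
    _ = _ := (measurePreserving_revEquiv c).integral_comp'
        (fun v => star h (concatEquiv hd (t, v)) * g (concatEquiv hn (s, v)))

theorem L2inner_reindex_arc_left {f : (Fin m → ℝ) → ℂ} {g : (Fin n → ℝ) → ℂ}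
    {h : (Fin d → ℝ) → ℂ} (hf : MemLp f 2 (μpos m)) (hg : MemLp g 2 (μpos n))
    (hh : MemLp h 2 (μpos d)) :
    L2inner d (reindex (show m + n - 2 * b = d by omega) (arc m n b f g)) h
      = L2inner m f (reindex (show d + n - 2 * c = m by omega) (arc d n c h (adjF n g))) := by
  have hmp := measurePreserving_concatRevEquiv hm
  have hnp := measurePreserving_concatEquiv hn
  have hdp := measurePreserving_concatEquiv hd
  have hleft : L2inner d (reindex (show m + n - 2 * b = d by omega) (arc m n b f g)) h
      = ∫ p, kernelComp (μpos b) (f ∘ concatRevEquiv hm) (g ∘ concatEquiv hn) p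
          * (star h ∘ concatEquiv hd) p ∂(μpos a).prod (μpos c) := by
    rw [← reindex_arc_comp_concatEquiv hm hn hd]
    exact (hdp.integral_comp' fun x => reindex _ (arc m n b f g) x * star h x).symm
  rw [hleft, integral_kernelComp_mul (hf.comp_measurePreserving hmp)
    (hg.comp_measurePreserving hnp) (hh.star.comp_measurePreserving hdp)]
  simp only [← conj_reindex_arc_adjF_concatRevEquiv hm hn hd]
  exact hmp.integral_comp' fun x => f x * (starRingEnd ℂ) (reindex _ (arc d n c h (adjF n g)) x)

theorem L2inner_reindex_arc_left_of_isSymmFn {f : (Fin m → ℝ) → ℂ} {g : (Fin n → ℝ) → ℂ}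
    {h : (Fin d → ℝ) → ℂ} (hf : MemLp f 2 (μpos m)) (hg : MemLp g 2 (μpos n))
    (hgs : IsSymmFn n g) (hh : MemLp h 2 (μpos d)) :
    L2inner d (reindex (show m + n - 2 * b = d by omega) (arc m n b f g)) h
      = L2inner m f (reindex (show d + n - 2 * c = m by omega) (arc d n c h g)) :=
  (L2inner_reindex_arc_left hm hn hd hf hg hh).trans (L2inner_congr_ae_right f
    (reindex_arc_congr_ae_right hd ((add_comm c b).trans hn) hm h hgs).symm)

end Adjunction

theorem norm_L2inner_reindex_arc_sub_L2inner_le {b q : ℕ} (hq : b + b = q)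
    {f g : (Fin q → ℝ) → ℂ} (hf : MemLp f 2 (μpos q))
    (hg : MemLp g 2 (μpos q)) (hgs : IsSymmFn q g) :
    ‖L2inner q (reindex (show q + q - 2 * b = q by omega) (arc q q b f g)) g - L2inner q f g‖
      ≤ L2norm q f
        * L2norm q (reindex (show q + q - 2 * b = q by omega) (arc q q b g g) - g) := by
  have harc := memLp_reindex_arc hq hq hq hg hg
  rw [L2inner_reindex_arc_left_of_isSymmFn hq hq hq hf hg hgs hg, ← L2inner_sub_right hf harc hg]
  exact norm_L2inner_le hf (harc.sub hg)

end ArcContraction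

section Limits

variable {ι : Type*} {l : Filter ι}

theorem tendsto_sum_sq_zero_iff {κ : Type*} {s : Finset κ} {a : κ → ι → ℝ} :
    Tendsto (fun i => ∑ k ∈ s, a k i ^ 2) l (𝓝 0) ↔ ∀ k ∈ s, Tendsto (a k) l (𝓝 0) := by
  refine ⟨fun h k hk => ?_, fun h => ?_⟩
  · have hsq : Tendsto (fun i => a k i ^ 2) l (𝓝 0) :=
      squeeze_zero (fun _ => sq_nonneg _) (fun i => Finset.single_le_sum
        (f := fun k => a k i ^ 2) (fun _ _ => sq_nonneg _) hk) h
    simpa [Real.sqrt_sq_eq_abs, tendsto_zero_iff_abs_tendsto_zero, Function.comp_def] using hsq.sqrt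
  · simpa using tendsto_finsetSum s fun k hk => (h k hk).pow 2

theorem tendsto_re_L2inner_reindex_arc_zero {b q : ℕ} (hq : b + b = q)
    {f g : ι → (Fin q → ℝ) → ℂ} (hf : ∀ i, MemLp (f i) 2 (μpos q))
    (hg : ∀ i, MemLp (g i) 2 (μpos q)) (hgs : ∀ i, IsSymmFn q (g i))
    (hf_bdd : l.IsBoundedUnder (· ≤ ·) fun i => L2norm q (f i))
    (hfg : Tendsto (fun i => (L2inner q (f i) (g i)).re) l (𝓝 0))
    (hhalf : Tendsto (fun i => L2norm q
      (reindex (show q + q - 2 * b = q by omega) (arc q q b (g i) (g i)) - g i)) l (𝓝 0)) :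
    Tendsto (fun i => (L2inner q
      (reindex (show q + q - 2 * b = q by omega) (arc q q b (f i) (g i))) (g i)).re) l (𝓝 0) := by
  have hf_bdd' : l.IsBoundedUnder (· ≤ ·) (norm ∘ fun i => L2norm q (f i)) := by
    simpa only [Function.comp_def, Real.norm_of_nonneg (L2norm_nonneg _ _)] using hf_bdd
  have hdiff := squeeze_zero_norm
    (fun i => norm_L2inner_reindex_arc_sub_L2inner_le hq (hf i) (hg i) (hgs i))
    (isBoundedUnder_le_mul_tendsto_zero hf_bdd' hhalf)
  simpa using ((Complex.continuous_re.tendsto 0).comp hdiff).add hfg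

end Limits

theorem arc_contraction_combined_iff_general {ι : Type*} {l : Filter ι} {p q : ℕ} (hp : 0 < p)
    (hq : p + p = q) {f g : ι → (Fin q → ℝ) → ℂ} (hf : ∀ i, MemLp (f i) 2 (μpos q))
    (hg : ∀ i, MemLp (g i) 2 (μpos q)) (hgs : ∀ i, IsSymmFn q (g i))
    (hf_bdd : l.IsBoundedUnder (· ≤ ·) fun i => L2norm q (f i))
    (hfg : Tendsto (fun i => (L2inner q (f i) (g i)).re) l (𝓝 0))
    (hhalf : Tendsto (fun i => L2norm q
      (reindex (show q + q - 2 * p = q by omega) (arc q q p (g i) (g i)) - g i)) l (𝓝 0)) :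
    Tendsto (fun i =>
        L2norm q (reindex (show q + q - 2 * p = q by omega) (arc q q p (f i) (g i))) ^ 2
        + 2 * (L2inner q (reindex (show q + q - 2 * p = q by omega)
            (arc q q p (f i) (g i))) (g i)).re
        + ∑ r ∈ (Finset.Icc 1 (q - 1)).erase p,
            L2norm (q + q - 2 * r) (arc q q r (f i) (g i)) ^ 2) l (𝓝 0)
    ↔ ∀ r, 1 ≤ r → r ≤ q - 1 →
        Tendsto (fun i => L2norm (q + q - 2 * r) (arc q q r (f i) (g i))) l (𝓝 0) := by
  have hcross := (tendsto_re_L2inner_reindex_arc_zero hq hf hg hgs hf_bdd hfg hhalf).const_mul 2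
  have hmem : p ∈ Finset.Icc 1 (q - 1) := Finset.mem_Icc.2 (by omega)
  rw [mul_zero] at hcross
  calc _ ↔ Tendsto (fun i => ∑ r ∈ Finset.Icc 1 (q - 1),
          L2norm (q + q - 2 * r) (arc q q r (f i) (g i)) ^ 2) l (𝓝 0) := by
        refine tendsto_iff_of_dist (hcross.norm.congr' (.of_forall fun i => ?_) |>.trans (by simp))
        rw [Real.dist_eq, ← Finset.add_sum_erase _ _ hmem, L2norm_reindex, Real.norm_eq_abs]
        congr 1
        ring
    _ ↔ _ := by simp only [tendsto_sum_sq_zero_iff, Finset.mem_Icc, and_imp]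

/-- the combined fourth-moment quantity
`‖f_n ⌢_{q/2} g_n‖² + 2 Re⟨f_n ⌢_{q/2} g_n, g_n⟩ + Σ_{1 ≤ r ≤ q-1, r ≠ q/2} ‖f_n ⌢_r g_n‖²`
tends to `0` iff all contraction norms `‖f_n ⌢_r g_n‖`, `1 ≤ r ≤ q-1`, tend to `0`. -/
theorem arc_contraction_combined_iff (q : ℕ) (hq2 : 2 ≤ q) (hqe : q % 2 = 0)
    (lam1 lam2 : ℝ) (hlam1 : 0 < lam1) (hlam2 : 0 < lam2)
    (f g : ℕ → (Fin q → ℝ) → ℂ)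
    (hf : ∀ n, MeasureTheory.MemLp (f n) 2 (μpos q))
    (hg : ∀ n, MeasureTheory.MemLp (g n) 2 (μpos q))
    (hfs : ∀ n, IsSymmFn q (f n)) (hgs : ∀ n, IsSymmFn q (g n))
    (hff : Filter.Tendsto (fun n => L2inner q (f n) (f n)) Filter.atTop (nhds (lam1 : ℂ)))
    (hgg : Filter.Tendsto (fun n => L2inner q (g n) (g n)) Filter.atTop (nhds (lam2 : ℂ)))
    (hfg : Filter.Tendsto (fun n => L2inner q (f n) (g n)) Filter.atTop (nhds 0))
    (hhalf : Filter.Tendsto (fun n => L2norm q (fun t =>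
        reindex (show q + q - 2 * (q / 2) = q by omega) (arc q q (q / 2) (g n) (g n)) t
          - g n t)) Filter.atTop (nhds 0)) :
    Filter.Tendsto (fun n =>
        (L2norm q (reindex (show q + q - 2 * (q / 2) = q by omega)
            (arc q q (q / 2) (f n) (g n)))) ^ 2
        + 2 * (L2inner q (reindex (show q + q - 2 * (q / 2) = q by omega)
            (arc q q (q / 2) (f n) (g n))) (g n)).re
        + ∑ r ∈ (Finset.Icc 1 (q - 1)).erase (q / 2),
            (L2norm (q + q - 2 * r) (arc q q r (f n) (g n))) ^ 2)
      Filter.atTop (nhds 0)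
    ↔ ∀ r, 1 ≤ r → r ≤ q - 1 →
        Filter.Tendsto (fun n => L2norm (q + q - 2 * r) (arc q q r (f n) (g n)))
          Filter.atTop (nhds 0) := by
  have hf_norm : Tendsto (fun n => L2norm q (f n)) atTop (𝓝 √lam1) := by
    simpa only [L2norm_eq_sqrt_re_L2inner, Function.comp_def, Complex.ofReal_re] using
      ((Complex.continuous_re.tendsto _).comp hff).sqrt
  exact arc_contraction_combined_iff_general (by omega) (show q / 2 + q / 2 = q by omega)
    hf hg hgs hf_norm.isBoundedUnder_le ((Complex.continuous_re.tendsto 0).comp hfg) hhalf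

end
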